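/- arXiv:2002.12202 — 2 statements merged into one kernel-verified Lean document; each statement's English description precedes it below -/
import Mathlib

section
/- Let d, n, m ≥ 1 be integers and let P, Q ∈ ℂ[z] be monic polynomials of degree d, each splitting as a product of d pairwise distinct linear factors (i.e., having only simple roots). Then the ℂ-algebras ℂ[X,Y,Z,W]/(X^n Y − P(Z)) and ℂ[X,Y,Z,W]/(X^m Y − Q(Z)) are isomorphic. -/
open MvPolynomial

/-- The coordinate ring `ℂ[X,Y,Z,W]/(X^k Y - P(Z))` of the cylinder over the classical
Danielewski surface `x^k y = P(z)`.  Variables: `X 0 = X`, `X 1 = Y`, `X 2 = Z`, `X 3 = W`. -/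
abbrev CylRing (k : ℕ) (P : Polynomial ℂ) : Type :=
  MvPolynomial (Fin 4) ℂ ⧸
    Ideal.span {(X 0 : MvPolynomial (Fin 4) ℂ) ^ k * X 1 - Polynomial.aeval (X 2) P}

/-!
Let `a i` and `b i` be the roots of `P` and `Q`. Choose Hermite interpolants `g`, sending every
`a i` to `b i` to order `m`, and `h`, sending every `b i` to `a i` to order `n`. On the cylinder
over `x ^ n * y = P(z)` the function `z' = g(z) + x ^ m * w` satisfies `x ^ m ∣ Q(z')`, and
`x ^ n ∣ z - h(z')`: modulo `x ^ n` the pairwise comaximal elements `z - a i` have product zero, and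
modulo `z - a i` the element `z' - b i` is a multiple of `x`. Dividing, `x`, `Q(z') / x ^ m`, `z'`
and `(z - h(z')) / x ^ n` define a morphism to the cylinder over `x ^ m * y = Q(z)`. Exchanging the
two surfaces gives a morphism in the other direction, and the two are mutually inverse because `x`
is not a zero divisor.
-/

open Finset (univ)
open Lagrange (nodal)
open scoped Polynomial

section Interpolation

variable {K ι R : Type*} [CommRing K] [CommRing R] [Algebra K R]
  {a b : ι → K} {g h : K[X]} {k m n : ℕ}

/-- `g` takes the value `b i` at the node `a i` to order `m`, i.e. it is a Hermite interpolant whose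
prescribed derivatives of orders `1, …, m - 1` are zero. Divisibility stands in for derivatives so
that the notion is meaningful in every characteristic. -/
def IsHermiteInterpolant (a b : ι → K) (m : ℕ) (g : K[X]) : Prop :=
  ∀ i, (Polynomial.X - Polynomial.C (a i)) ^ m ∣ g - Polynomial.C (b i)

theorem IsHermiteInterpolant.of_le (hg : IsHermiteInterpolant a b m g) (hkm : k ≤ m) :
    IsHermiteInterpolant a b k g :=
  fun i ↦ (pow_dvd_pow _ hkm).trans (hg i)

theorem IsHermiteInterpolant.pow_dvd_aeval_sub (hg : IsHermiteInterpolant a b m g) (z : R)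
    (i : ι) :
    (z - algebraMap K R (a i)) ^ m ∣ Polynomial.aeval z g - algebraMap K R (b i) := by
  simpa using map_dvd (Polynomial.aeval z) (hg i)

theorem pairwise_isCoprime_X_sub_C (ha : Pairwise fun i j ↦ IsUnit (a i - a j)) :
    Pairwise fun i j ↦
      IsCoprime (Polynomial.X - Polynomial.C (a i)) (Polynomial.X - Polynomial.C (a j)) :=
  fun _ _ hij ↦ Polynomial.isCoprime_X_sub_C_of_isUnit_sub (ha hij)

theorem exists_isHermiteInterpolant [Finite ι] (ha : Pairwise fun i j ↦ IsUnit (a i - a j))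
    (b : ι → K) (m : ℕ) : ∃ g, IsHermiteInterpolant a b m g := by
  obtain ⟨g, hg⟩ := Ideal.exists_forall_sub_mem_ideal
    (I := fun i ↦ Ideal.span {(Polynomial.X - Polynomial.C (a i)) ^ m})
    (fun i j hij ↦ (Ideal.isCoprime_span_singleton_iff _ _).mpr
      (pairwise_isCoprime_X_sub_C ha hij).pow)
    (fun i ↦ Polynomial.C (b i))
  exact ⟨g, fun i ↦ Ideal.mem_span_singleton.mp (hg i)⟩

theorem sub_dvd_aeval_sub (s t : R) (p : K[X]) :
    s - t ∣ Polynomial.aeval s p - Polynomial.aeval t p := by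
  simpa only [← Polynomial.eval_map_algebraMap] using
    Polynomial.sub_dvd_eval_sub s t (p.map (algebraMap K R))

variable [Fintype ι]

theorem aeval_nodal_univ (a : ι → K) (z : R) :
    Polynomial.aeval z (nodal univ a) = ∏ i, (z - algebraMap K R (a i)) := by
  simp [Lagrange.nodal_eq]

theorem IsHermiteInterpolant.pow_dvd_aeval_nodal (hg : IsHermiteInterpolant a b m g) {x z t : R}
    (hz : x ∣ Polynomial.aeval z (nodal univ a)) (ht : x ^ m ∣ t) :
    x ^ m ∣ Polynomial.aeval (Polynomial.aeval z g + t) (nodal univ b) := by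
  have hx : x ^ m ∣ Polynomial.aeval (Polynomial.aeval z g) (nodal univ b) := calc
    x ^ m ∣ (∏ i, (z - algebraMap K R (a i))) ^ m :=
      pow_dvd_pow_of_dvd (aeval_nodal_univ a z ▸ hz) m
    _ = ∏ i, (z - algebraMap K R (a i)) ^ m := (Finset.prod_pow _ _ _).symm
    _ ∣ ∏ i, (Polynomial.aeval z g - algebraMap K R (b i)) :=
      Finset.prod_dvd_prod_of_dvd _ _ fun i _ ↦ hg.pow_dvd_aeval_sub z i
    _ = Polynomial.aeval (Polynomial.aeval z g) (nodal univ b) := (aeval_nodal_univ _ _).symm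
  refine (dvd_sub_left hx).mp (ht.trans ?_)
  simpa only [add_sub_cancel_left] using
    sub_dvd_aeval_sub (Polynomial.aeval z g + t) (Polynomial.aeval z g) (nodal univ b)

theorem IsHermiteInterpolant.aeval_aeval_add_eq_self
    (ha : Pairwise fun i j ↦ IsUnit (a i - a j))
    (hg : IsHermiteInterpolant a b 1 g) (hh : IsHermiteInterpolant b a n h) {z t : R}
    (hz : Polynomial.aeval z (nodal univ a) = 0) (ht : t ^ n = 0) :
    Polynomial.aeval (Polynomial.aeval z g + t) h = z := by
  set v := Polynomial.aeval z g + t with hv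
  have hdvd (i : ι) : z - algebraMap K R (a i) ∣ z - Polynomial.aeval v h := by
    have hgz : z - algebraMap K R (a i) ∣ (v - algebraMap K R (b i)) - t := by
      simpa [hv, add_sub_right_comm] using hg.pow_dvd_aeval_sub z i
    have hvn : z - algebraMap K R (a i) ∣ (v - algebraMap K R (b i)) ^ n := by
      simpa [ht] using hgz.trans (sub_dvd_pow_sub_pow _ t n)
    simpa using dvd_sub dvd_rfl (hvn.trans (hh.pow_dvd_aeval_sub v i))
  have hcoprime : Pairwise fun i j ↦
      IsCoprime (z - algebraMap K R (a i)) (z - algebraMap K R (a j)) := fun i j hij ↦ by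
    simpa using (pairwise_isCoprime_X_sub_C ha hij).map (Polynomial.aeval (R := K) z).toRingHom
  have hprod := Fintype.prod_dvd_of_coprime hcoprime hdvd
  rw [← aeval_nodal_univ, hz, zero_dvd_iff, sub_eq_zero] at hprod
  exact hprod.symm

theorem IsHermiteInterpolant.dvd_sub_aeval_aeval_add
    (ha : Pairwise fun i j ↦ IsUnit (a i - a j))
    (hg : IsHermiteInterpolant a b 1 g) (hh : IsHermiteInterpolant b a n h) {s z t : R}
    (hz : s ∣ Polynomial.aeval z (nodal univ a)) (ht : s ∣ t ^ n) :
    s ∣ z - Polynomial.aeval (Polynomial.aeval z g + t) h := by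
  let π := Ideal.Quotient.mkₐ K (Ideal.span {s})
  have hπ (r : R) : π r = 0 ↔ s ∣ r := Ideal.Quotient.eq_zero_iff_dvd s r
  rw [← hπ] at hz ht ⊢
  rw [← Polynomial.aeval_algHom_apply] at hz
  rw [map_pow] at ht
  rw [map_sub, ← Polynomial.aeval_algHom_apply, map_add, ← Polynomial.aeval_algHom_apply,
    aeval_aeval_add_eq_self ha hg hh hz ht, sub_self]

end Interpolation

section Regular

variable {K R σ : Type*} [CommSemiring K] [CommRing R]

theorem dvd_of_monic_of_dvd_C_mul {p q : R[X]} {r : R} (hp : p.Monic) (hr : IsLeftRegular r)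
    (h : p ∣ Polynomial.C r * q) : p ∣ q := by
  rw [← Polynomial.modByMonic_eq_zero_iff_dvd hp] at h ⊢
  rw [← Polynomial.smul_eq_C_mul, Polynomial.smul_modByMonic] at h
  ext i
  refine hr ?_
  simpa using congrArg (Polynomial.coeff · i) h

theorem exists_algEquiv_polynomial_mvPolynomial (j : σ) :
    ∃ e : MvPolynomial σ K ≃ₐ[K] (MvPolynomial {i // i ≠ j} K)[X],
      e (X j) = Polynomial.X ∧ ∀ i : {i // i ≠ j}, e (X i) = Polynomial.C (X i) := by
  classical
  refine ⟨(renameEquiv K (Equiv.optionSubtypeNe j).symm).trans (optionEquivLeft K _), ?_,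
    fun i ↦ ?_⟩
  · simp
  · simp [Equiv.optionSubtypeNe_symm_of_ne i.2]

end Regular

/-- The coordinate ring `K[X,Y,Z,W]/(X^k Y - P(Z))` of the cylinder over `x^k y = P(z)` over an
arbitrary base ring; `CylRing` is the case `K = ℂ`. -/
abbrev DanielewskiCylinder {K : Type*} [CommRing K] (k : ℕ) (P : K[X]) : Type _ :=
  MvPolynomial (Fin 4) K ⧸
    Ideal.span {(X 0 : MvPolynomial (Fin 4) K) ^ k * X 1 - Polynomial.aeval (X 2) P}

namespace DanielewskiCylinder

variable {K : Type*} [CommRing K] {k m n : ℕ} {P Q g h : K[X]}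

/-- The coordinate functions `x, y, z, w` of the cylinder, for `i = 0, 1, 2, 3`. -/
noncomputable def coord (k : ℕ) (P : K[X]) (i : Fin 4) : DanielewskiCylinder k P :=
  Ideal.Quotient.mk _ (X i)

theorem coord_zero_pow_mul_coord_one (k : ℕ) (P : K[X]) :
    coord k P 0 ^ k * coord k P 1 = Polynomial.aeval (coord k P 2) P := by
  have h : Polynomial.aeval (coord k P 2) P =
      Ideal.Quotient.mkₐ K _ (Polynomial.aeval (X 2) P) :=
    Polynomial.aeval_algHom_apply (Ideal.Quotient.mkₐ K _) (X 2) P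
  rw [h, coord, coord, ← map_pow, ← map_mul]
  exact (Ideal.Quotient.mk_eq_mk_iff_sub_mem _ _).mpr (Ideal.mem_span_singleton_self _)

theorem exists_algHom {R : Type*} [CommRing R] [Algebra K R] (v : Fin 4 → R)
    (hv : v 0 ^ k * v 1 = Polynomial.aeval (v 2) P) :
    ∃ φ : DanielewskiCylinder k P →ₐ[K] R, ∀ i, φ (coord k P i) = v i := by
  refine ⟨Ideal.Quotient.liftₐ _ (aeval v) fun r hr ↦ ?_, fun i ↦ aeval_X v i⟩
  obtain ⟨q, rfl⟩ := Ideal.mem_span_singleton.mp hr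
  simp [← Polynomial.aeval_algHom_apply, hv]

theorem algHom_ext {R : Type*} [Semiring R] [Algebra K R]
    {φ ψ : DanielewskiCylinder k P →ₐ[K] R} (h : ∀ i, φ (coord k P i) = ψ (coord k P i)) :
    φ = ψ :=
  Ideal.Quotient.algHom_ext _ (MvPolynomial.algHom_ext h)

-- As a polynomial in `Z`, the defining equation is monic up to sign.
theorem dvd_of_dvd_X_zero_mul (hP : P.Monic) (hdeg : 0 < P.degree)
    {f : MvPolynomial (Fin 4) K}
    (h : X 0 ^ k * X 1 - Polynomial.aeval (X 2) P ∣ X 0 * f) :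
    X 0 ^ k * X 1 - Polynomial.aeval (X 2) P ∣ f := by
  nontriviality K
  obtain ⟨e, he₂, he⟩ := exists_algEquiv_polynomial_mvPolynomial (K := K) (2 : Fin 4)
  have he₀ := he ⟨0, by decide⟩
  have he₁ := he ⟨1, by decide⟩
  have hF : e (Polynomial.aeval (X 2) P - X 0 ^ k * X 1) =
      P.map (algebraMap K _) - Polynomial.C (X ⟨0, by decide⟩ ^ k * X ⟨1, by decide⟩) := by
    rw [map_sub, ← Polynomial.aeval_algHom_apply, he₂, Polynomial.aeval_X_left_eq_map, map_mul,
      map_pow, he₀, he₁, ← map_pow, ← map_mul]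
  have hmonic : (e (Polynomial.aeval (X 2) P - X 0 ^ k * X 1)).Monic := by
    rw [hF]
    refine (hP.map _).sub_of_left (Polynomial.degree_C_le.trans_lt ?_)
    rwa [hP.degree_map]
  rw [← neg_sub, neg_dvd, ← map_dvd_iff e] at h ⊢
  rw [map_mul, he₀] at h
  exact dvd_of_monic_of_dvd_C_mul hmonic isRegular_X.left h

theorem isLeftRegular_coord_zero (hP : P.Monic) (hdeg : 0 < P.degree) :
    IsLeftRegular (coord k P 0) := by
  rw [isLeftRegular_iff_right_eq_zero_of_mul]
  intro r hr
  obtain ⟨f, rfl⟩ := Ideal.Quotient.mk_surjective r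
  rw [coord, ← map_mul, Ideal.Quotient.eq_zero_iff_dvd] at hr
  exact (Ideal.Quotient.eq_zero_iff_dvd _ _).mpr (dvd_of_dvd_X_zero_mul hP hdeg hr)

theorem algHom_eq_id (hx : IsLeftRegular (coord k P 0))
    {φ : DanielewskiCylinder k P →ₐ[K] DanielewskiCylinder k P}
    (h₀ : φ (coord k P 0) = coord k P 0) (h₂ : φ (coord k P 2) = coord k P 2)
    (h₃ : coord k P 0 ^ m * φ (coord k P 3) = coord k P 0 ^ m * coord k P 3) :
    φ = AlgHom.id K _ := by
  have h₁ : coord k P 0 ^ k * φ (coord k P 1) = coord k P 0 ^ k * coord k P 1 := by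
    have := congrArg φ (coord_zero_pow_mul_coord_one k P)
    rwa [map_mul, map_pow, h₀, ← Polynomial.aeval_algHom_apply, h₂,
      ← coord_zero_pow_mul_coord_one] at this
  refine algHom_ext fun i ↦ ?_
  fin_cases i
  · exact h₀
  · exact hx.pow k h₁
  · exact h₂
  · exact hx.pow m h₃

/-- The morphism from the cylinder over `x ^ n * y = P(z)` to the one over `x ^ m * y = Q(z)` given
by the functions `x`, `z' = g(z) + x ^ m * w` and `(z - h(z')) / x ^ n` in the roles of `x`, `z` and
`w`. The quotient is encoded by its product with `x ^ n`. -/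
structure IsTransition (g h : K[X]) (φ : DanielewskiCylinder m Q →ₐ[K] DanielewskiCylinder n P) :
    Prop where
  map_coord_zero : φ (coord m Q 0) = coord n P 0
  map_coord_two : φ (coord m Q 2) =
    Polynomial.aeval (coord n P 2) g + coord n P 0 ^ m * coord n P 3
  pow_mul_map_coord_three : coord n P 0 ^ n * φ (coord m Q 3) =
    coord n P 2 - Polynomial.aeval (φ (coord m Q 2)) h

theorem exists_isTransition {ι : Type*} [Fintype ι] {a b : ι → K}
    (ha : Pairwise fun i j ↦ IsUnit (a i - a j)) (hn : n ≠ 0) (hm : m ≠ 0)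
    (hg : IsHermiteInterpolant a b m g) (hh : IsHermiteInterpolant b a n h) :
    ∃ φ : DanielewskiCylinder m (nodal univ b) →ₐ[K] DanielewskiCylinder n (nodal univ a),
      IsTransition g h φ := by
  set x := coord n (nodal univ a) 0
  set z := coord n (nodal univ a) 2
  set w := coord n (nodal univ a) 3
  have hz : x ^ n ∣ Polynomial.aeval z (nodal univ a) :=
    Dvd.intro _ (coord_zero_pow_mul_coord_one n _)
  have hxw : x ^ n ∣ (x ^ m * w) ^ n :=
    pow_dvd_pow_of_dvd ((dvd_pow_self x hm).mul_right w) n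
  obtain ⟨u, hu⟩ := hg.pow_dvd_aeval_nodal ((dvd_pow_self x hn).trans hz) (dvd_mul_right _ w)
  obtain ⟨t, ht⟩ := IsHermiteInterpolant.dvd_sub_aeval_aeval_add ha
    (hg.of_le (Nat.one_le_iff_ne_zero.mpr hm)) hh hz hxw
  obtain ⟨φ, hφ⟩ := exists_algHom (k := m) (P := nodal univ b)
    ![x, u, Polynomial.aeval z g + x ^ m * w, t] hu.symm
  refine ⟨φ, hφ 0, hφ 2, ?_⟩
  rw [hφ 2, hφ 3]
  exact ht.symm

theorem IsTransition.comp_eq_id (hx : IsLeftRegular (coord n P 0))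
    {φ : DanielewskiCylinder m Q →ₐ[K] DanielewskiCylinder n P}
    {ψ : DanielewskiCylinder n P →ₐ[K] DanielewskiCylinder m Q}
    (hφ : IsTransition g h φ) (hψ : IsTransition h g ψ) : φ.comp ψ = AlgHom.id K _ := by
  have h₂ : φ (ψ (coord n P 2)) = coord n P 2 := by
    rw [hψ.map_coord_two, map_add, map_mul, map_pow, hφ.map_coord_zero,
      hφ.pow_mul_map_coord_three, ← Polynomial.aeval_algHom_apply, add_sub_cancel]
  have h₃ : coord n P 0 ^ m * φ (ψ (coord n P 3)) = coord n P 0 ^ m * coord n P 3 := calc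
    _ = φ (coord m Q 0 ^ m * ψ (coord n P 3)) := by rw [map_mul, map_pow, hφ.map_coord_zero]
    _ = φ (coord m Q 2) - Polynomial.aeval (φ (ψ (coord n P 2))) g := by
      rw [hψ.pow_mul_map_coord_three, map_sub, ← Polynomial.aeval_algHom_apply]
    _ = coord n P 0 ^ m * coord n P 3 := by rw [h₂, hφ.map_coord_two, add_sub_cancel_left]
  refine algHom_eq_id hx ?_ h₂ h₃
  rw [AlgHom.comp_apply, hψ.map_coord_zero, hφ.map_coord_zero]

theorem isLeftRegular_coord_zero_nodal {ι : Type*} [Fintype ι] [Nonempty ι] (a : ι → K) :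
    IsLeftRegular (coord k (nodal univ a) 0) := by
  rcases subsingleton_or_nontrivial K with _ | _
  · have := Module.subsingleton K (DanielewskiCylinder k (nodal univ a))
    exact fun _ _ _ ↦ Subsingleton.elim _ _
  · refine isLeftRegular_coord_zero Lagrange.nodal_monic ?_
    simp [Lagrange.degree_nodal, Fintype.card_pos]

end DanielewskiCylinder

open DanielewskiCylinder in
theorem cylinders_of_classical_Danielewski_surfaces_isomorphic_general {K ι : Type*} [CommRing K]
    [Fintype ι] [Nonempty ι] {n m : ℕ} (hn : n ≠ 0) (hm : m ≠ 0) {a b : ι → K}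
    (ha : Pairwise fun i j ↦ IsUnit (a i - a j)) (hb : Pairwise fun i j ↦ IsUnit (b i - b j)) :
    Nonempty (DanielewskiCylinder n (nodal univ a) ≃ₐ[K] DanielewskiCylinder m (nodal univ b)) := by
  obtain ⟨g, hg⟩ := exists_isHermiteInterpolant ha b m
  obtain ⟨h, hh⟩ := exists_isHermiteInterpolant hb a n
  obtain ⟨φ, hφ⟩ := exists_isTransition ha hn hm hg hh
  obtain ⟨ψ, hψ⟩ := exists_isTransition hb hm hn hh hg
  exact ⟨AlgEquiv.ofAlgHom ψ φ (hψ.comp_eq_id (isLeftRegular_coord_zero_nodal b) hφ)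
    (hφ.comp_eq_id (isLeftRegular_coord_zero_nodal a) hψ)⟩

theorem cylinders_of_classical_Danielewski_surfaces_isomorphic
    (d n m : ℕ) (hd : 1 ≤ d) (hn : 1 ≤ n) (hm : 1 ≤ m)
    (P Q : Polynomial ℂ)
    -- P and Q are monic of degree d, splitting into d pairwise distinct linear factors
    (hP : ∃ a : Fin d → ℂ, Function.Injective a ∧
            P = ∏ i, (Polynomial.X - Polynomial.C (a i)))
    (hQ : ∃ b : Fin d → ℂ, Function.Injective b ∧
            Q = ∏ i, (Polynomial.X - Polynomial.C (b i))) :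
    Nonempty (CylRing n P ≃ₐ[ℂ] CylRing m Q) := by
  obtain ⟨a, ha, rfl⟩ := hP
  obtain ⟨b, hb, rfl⟩ := hQ
  have : Nonempty (Fin d) := Fin.pos_iff_nonempty.mp hd
  exact cylinders_of_classical_Danielewski_surfaces_isomorphic_general
    (Nat.one_le_iff_ne_zero.mp hn) (Nat.one_le_iff_ne_zero.mp hm)
    (fun _ _ hij ↦ (sub_ne_zero.mpr (ha.ne hij)).isUnit)
    (fun _ _ hij ↦ (sub_ne_zero.mpr (hb.ne hij)).isUnit)
end

section
/- Let n ≥ 1 and let Q(x,z) ∈ ℂ[x,z] be such that Q(0,z) ∈ ℂ[z] has degree d ≥ 2 and exactly d pairwise distinct roots r_1,…,r_d (all simple). For each i, let σ_i ∈ ℂ[x] be a polynomial of degree < n with σ_i(0) = r_i and x^n dividing Q(x,σ_i(x)) in ℂ[x]. Let g ∈ ℂ[x,t] be a polynomial such that g(x, r_i + x·t) ≡ σ_i(x) mod (x^n) in ℂ[x,t] for all 1 ≤ i ≤ d, and set P(z) = ∏_{i=1}^d (z − r_i). Then there exists a ℂ-algebra isomorphism Φ : ℂ[X,Y,Z,W]/(XY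 − P(Z)) → ℂ[X,Y,Z,W]/(X^n Y − Q(X,Z)) such that, writing x̄, ȳ, z̄, w̄ for the residue classes of X, Y, Z, W: Φ(x̄) = x̄, Φ(z̄) = z̄ + x̄ w̄, x̄ · Φ(ȳ) = P(z̄ + x̄ w̄), and x̄^n · Φ(w̄) = z̄ − g(x̄, z̄ + x̄ w̄). -/
open MvPolynomial

/-- The coordinate ring `ℂ[X,Y,Z,W]/(X^n Y - Q(X,Z))` of the cylinder over the Danielewski
hypersurface `x^n y = Q(x,z)`, where `Q` is a polynomial in two variables (`X 0 = x`,
`X 1 = z`).  Variables of the ambient ring: `X 0 = X`, `X 1 = Y`, `X 2 = Z`, `X 3 = W`. -/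
abbrev DHCylRing (n : ℕ) (Q : MvPolynomial (Fin 2) ℂ) : Type :=
  MvPolynomial (Fin 4) ℂ ⧸
    Ideal.span {(X 0 : MvPolynomial (Fin 4) ℂ) ^ n * X 1 -
      MvPolynomial.aeval ![(X 0 : MvPolynomial (Fin 4) ℂ), X 2] Q}

/-- The coordinate ring `ℂ[X,Y,Z,W]/(X Y - P(Z))` of the cylinder over the classical
Danielewski surface `x y = P(z)`. -/
abbrev WCylRing (P : Polynomial ℂ) : Type :=
  MvPolynomial (Fin 4) ℂ ⧸
    Ideal.span {(X 0 : MvPolynomial (Fin 4) ℂ) * X 1 - Polynomial.aeval (X 2) P}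

noncomputable abbrev dhMk (n : ℕ) (Q : MvPolynomial (Fin 2) ℂ) :
    MvPolynomial (Fin 4) ℂ →+* DHCylRing n Q :=
  Ideal.Quotient.mk _

noncomputable abbrev wMk (P : Polynomial ℂ) :
    MvPolynomial (Fin 4) ℂ →+* WCylRing P :=
  Ideal.Quotient.mk _

/-!
The isomorphism is the shear `z ↦ z + x w`, and everything is a matter of divisibility by powers
of `x`. A polynomial `G(x, s)` satisfies `x ^ n ∣ G(x, r + x t)` exactly when `G` lies in
`(x, s - r) ^ n`; as the `rᵢ` are distinct, these ideals are coprime, so the conditions at all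
roots say that `G` lies in `(x, P(s)) ^ n`, and then `x ^ n ∣ G(x, s)` in every algebra where
`x ∣ P(s)`. For `G = Q(x, g)` this shows that `g(x, s)` is a root of `Q(x, ·)` modulo `x ^ n`.
If `x ^ n y = Q(x, z)` and `s = z + x w`, then `z` is another such root, congruent to `g(x, s)`
modulo `x`; both agree modulo `x ^ n` because `Q(0, ·)` is separable (uniqueness in Hensel's
lemma). So the divisions defining the map and its inverse can be carried out, and since `x` is a
nonzerodivisor on both cylinders the two maps are mutually inverse.
-/

section Congruences

variable {k R S : Type*} [CommRing k] [CommRing R] [Algebra k R] [CommRing S] [Algebra k S]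

lemma map_aeval_pair (φ : R →ₐ[k] S) (p : MvPolynomial (Fin 2) k) (a b : R) :
    φ (aeval ![a, b] p) = aeval ![φ a, φ b] p := by
  rw [← AlgHom.comp_apply, comp_aeval]
  congr 2
  ext i
  fin_cases i <;> rfl

lemma dvd_aeval_sub_aeval {σ : Type*} {a : R} {s t : σ → R} (h : ∀ i, a ∣ s i - t i)
    (p : MvPolynomial σ k) : a ∣ aeval s p - aeval t p := by
  simp only [← Ideal.mem_span_singleton, ← Ideal.Quotient.mk_eq_mk_iff_sub_mem,
    ← Ideal.Quotient.mkₐ_eq_mk k] at h ⊢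
  rw [← AlgHom.comp_apply, ← AlgHom.comp_apply, comp_aeval, comp_aeval]
  simp only [h]

lemma dvd_aeval_pair_sub_aeval_pair {a x₁ x₂ y₁ y₂ : R} (hx : a ∣ x₁ - x₂) (hy : a ∣ y₁ - y₂)
    (p : MvPolynomial (Fin 2) k) : a ∣ aeval ![x₁, y₁] p - aeval ![x₂, y₂] p :=
  dvd_aeval_sub_aeval (Fin.forall_fin_two.2 ⟨hx, hy⟩) p

lemma dvd_polynomial_aeval_sub_aeval {a s t : R} (h : a ∣ s - t) (p : Polynomial k) :
    a ∣ Polynomial.aeval s p - Polynomial.aeval t p := by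
  simp only [Polynomial.aeval_def, Polynomial.eval₂_eq_eval_map]
  exact h.trans (Polynomial.sub_dvd_eval_sub _ _ _)

lemma dvd_aeval_pair_sub_aeval_aeval (Q : MvPolynomial (Fin 2) k) (x z : R) :
    x ∣ aeval ![x, z] Q -
      Polynomial.aeval z (aeval ![(0 : Polynomial k), Polynomial.X] Q) := by
  rw [map_aeval_pair, map_zero, Polynomial.aeval_X]
  exact dvd_aeval_pair_sub_aeval_pair (by simp) (by simp) Q

end Congruences

section BlowUp

variable {k : Type*} [CommRing k]

lemma coeff_aeval_X_zero_X_zero_mul_X_one (G : MvPolynomial (Fin 2) k) (d : Fin 2 →₀ ℕ) :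
    coeff (d + Finsupp.single 0 (d 1))
      (aeval ![(X 0 : MvPolynomial (Fin 2) k), X 0 * X 1] G) = coeff d G := by
  classical
  induction G using MvPolynomial.induction_on' with
  | add p q hp hq => simp only [map_add, coeff_add, hp, hq]
  | monomial u a =>
    have hu : aeval ![(X 0 : MvPolynomial (Fin 2) k), X 0 * X 1] (monomial u a) =
        monomial (u + Finsupp.single 0 (u 1)) a := by
      rw [aeval_monomial, monomial_eq]
      simp only [algebraMap_eq, Finsupp.prod_fintype, pow_zero, implies_true, Fin.prod_univ_two,
        Matrix.cons_val, Finsupp.add_apply, Finsupp.single_eq_same, ne_eq, one_ne_zero,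
        not_false_eq_true, Finsupp.single_eq_of_ne]
      ring
    have hinj : u + Finsupp.single 0 (u 1) = d + Finsupp.single 0 (d 1) ↔ u = d := by
      refine ⟨fun h ↦ ?_, fun h ↦ h ▸ rfl⟩
      have h1 : u 1 = d 1 := by simpa using DFunLike.congr_fun h 1
      rw [h1] at h
      exact add_right_cancel h
    simp only [hu, coeff_monomial, hinj]

lemma mem_span_X_pow_of_X_pow_dvd {n : ℕ} {G : MvPolynomial (Fin 2) k}
    (h : X 0 ^ n ∣ aeval ![(X 0 : MvPolynomial (Fin 2) k), X 0 * X 1] G) :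
    G ∈ Ideal.span {(X 0 : MvPolynomial (Fin 2) k), X 1} ^ n := by
  have hspan : Ideal.span {(X 0 : MvPolynomial (Fin 2) k), X 1} = idealOfVars (Fin 2) k := by
    rw [idealOfVars]
    congr 1
    ext
    simp [Fin.exists_fin_two, eq_comm]
  rw [hspan, mem_pow_idealOfVars_iff']
  intro d hd
  obtain ⟨q, hq⟩ := h
  rw [← coeff_aeval_X_zero_X_zero_mul_X_one, hq, X_pow_eq_monomial, coeff_monomial_mul', if_neg]
  rw [Finsupp.degree_eq_sum, Fin.sum_univ_two] at hd
  simpa [Finsupp.single_le_iff] using hd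

/-- The ideal `(x, P(z))` of `k[x, z]`, with `x = X 0` and `z = X 1`: the centre of the affine
modification `x y = P(z)` of the plane. -/
noncomputable abbrev centerIdeal (P : Polynomial k) : Ideal (MvPolynomial (Fin 2) k) :=
  Ideal.span {X 0, Polynomial.aeval (X 1) P}

lemma pow_dvd_aeval_pair_of_mem_centerIdeal_pow {R : Type*} [CommRing R] [Algebra k R] {n : ℕ}
    {P : Polynomial k} {G : MvPolynomial (Fin 2) k} (hG : G ∈ centerIdeal P ^ n) {x s : R}
    (hs : x ∣ Polynomial.aeval s P) : x ^ n ∣ aeval ![x, s] G := by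
  have hle : centerIdeal P ≤ (Ideal.span {x}).comap (aeval ![x, s] : _ →ₐ[k] R) := by
    simp [Ideal.span_le, Set.insert_subset_iff, Ideal.mem_span_singleton, hs,
      ← Polynomial.aeval_algHom_apply]
  rw [← Ideal.mem_span_singleton, ← Ideal.span_singleton_pow]
  exact Ideal.le_comap_pow _ n (Ideal.pow_right_mono hle n hG)

lemma isCoprime_centerIdeal {p q : Polynomial k} (h : IsCoprime p q) :
    IsCoprime (centerIdeal p) (centerIdeal q) := by
  obtain ⟨a, b, hab⟩ := h
  refine Ideal.isCoprime_iff_exists.2 ⟨Polynomial.aeval (X 1) (a * p), ?_,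
    Polynomial.aeval (X 1) (b * q), ?_, by rw [← map_add, hab, map_one]⟩
  all_goals
    rw [map_mul]
    exact Ideal.mul_mem_left _ _ (Ideal.subset_span (.inr rfl))

lemma centerIdeal_mul_le (p q : Polynomial k) :
    centerIdeal p * centerIdeal q ≤ centerIdeal (p * q) := by
  have hx : (X 0 : MvPolynomial (Fin 2) k) ∈ centerIdeal (p * q) := Ideal.subset_span (.inl rfl)
  rw [Ideal.span_pair_mul_span_pair, Ideal.span_le]
  rintro _ (rfl | rfl | rfl | rfl)
  · exact Ideal.mul_mem_right _ _ hx
  · exact Ideal.mul_mem_right _ _ hx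
  · exact Ideal.mul_mem_left _ _ hx
  · rw [← map_mul]
    exact Ideal.subset_span (.inr rfl)

lemma prod_centerIdeal_le {ι : Type*} (s : Finset ι) (p : ι → Polynomial k) :
    ∏ i ∈ s, centerIdeal (p i) ≤ centerIdeal (∏ i ∈ s, p i) := by
  classical
  induction s using Finset.induction_on with
  | empty => simp [Ideal.span_insert]
  | insert j s hj ih =>
    rw [Finset.prod_insert hj, Finset.prod_insert hj]
    exact (Ideal.mul_mono_right ih).trans (centerIdeal_mul_le _ _)

lemma mem_centerIdeal_X_sub_C_pow {n : ℕ} {G : MvPolynomial (Fin 2) k} {r : k}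
    (h : X 0 ^ n ∣ aeval ![(X 0 : MvPolynomial (Fin 2) k), C r + X 0 * X 1] G) :
    G ∈ centerIdeal (Polynomial.X - Polynomial.C r) ^ n := by
  let τ : MvPolynomial (Fin 2) k →ₐ[k] MvPolynomial (Fin 2) k := aeval ![X 0, X 1 - C r]
  have hmem := mem_span_X_pow_of_X_pow_dvd (n := n) (G := aeval ![X 0, C r + X 1] G)
    (by rw [map_aeval_pair]; simpa [algHom_C] using h)
  have hτ : τ (aeval ![X 0, C r + X 1] G) = G := by
    have h0 : τ (X 0) = X 0 := by simp [τ]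
    have h1 : τ (C r + X 1) = X 1 := by simp [τ, algHom_C]
    have hX : ![(X 0 : MvPolynomial (Fin 2) k), X 1] = X := by
      ext1 i
      fin_cases i <;> rfl
    rw [map_aeval_pair, h0, h1, hX, aeval_X_left_apply]
  have hmap := Ideal.mem_map_of_mem τ hmem
  rw [hτ, Ideal.map_pow, Ideal.map_span, Set.image_pair] at hmap
  simpa [τ, algebraMap_eq, centerIdeal] using hmap

lemma mem_centerIdeal_prod_pow {ι : Type*} [Fintype ι] {r : ι → k}
    (hr : Pairwise fun i j ↦ IsUnit (r i - r j)) {n : ℕ} {G : MvPolynomial (Fin 2) k}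
    (h : ∀ i, X 0 ^ n ∣ aeval ![(X 0 : MvPolynomial (Fin 2) k), C (r i) + X 0 * X 1] G) :
    G ∈ centerIdeal (∏ i, (Polynomial.X - Polynomial.C (r i))) ^ n := by
  refine Ideal.pow_right_mono (prod_centerIdeal_le _ _) n ?_
  rw [← Finset.prod_pow, Ideal.prod_eq_iInf_of_pairwise_isCoprime fun i _ j _ hij ↦
    (isCoprime_centerIdeal (Polynomial.isCoprime_X_sub_C_of_isUnit_sub (hr hij))).pow]
  simpa only [Ideal.mem_iInf, Finset.mem_univ, true_imp_iff] using
    fun i ↦ mem_centerIdeal_X_sub_C_pow (h i)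

lemma X_one_sub_mem_centerIdeal_prod {ι : Type*} [Fintype ι] {r : ι → k}
    (hr : Pairwise fun i j ↦ IsUnit (r i - r j)) {g : MvPolynomial (Fin 2) k}
    {σ : ι → Polynomial k} (hσ : ∀ i, (σ i).eval 0 = r i)
    (hg : ∀ i, (X 0 : MvPolynomial (Fin 2) k) ∣
      aeval ![(X 0 : MvPolynomial (Fin 2) k), C (r i) + X 0 * X 1] g -
        Polynomial.aeval (X 0) (σ i)) :
    X 1 - g ∈ centerIdeal (∏ i, (Polynomial.X - Polynomial.C (r i))) := by
  rw [← pow_one (centerIdeal _)]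
  refine mem_centerIdeal_prod_pow hr fun i ↦ ?_
  have hσr : (X 0 : MvPolynomial (Fin 2) k) ∣ Polynomial.aeval (X 0) (σ i) - C (r i) := by
    have h :=
      dvd_polynomial_aeval_sub_aeval (sub_zero (X 0 : MvPolynomial (Fin 2) k)).symm.dvd (σ i)
    rwa [← Polynomial.coeff_zero_eq_aeval_zero', Polynomial.coeff_zero_eq_eval_zero, hσ] at h
  rw [pow_one, map_sub, aeval_X, Matrix.cons_val_one, Matrix.cons_val_fin_one]
  convert dvd_sub (dvd_sub (dvd_mul_right (X 0) (X 1)) hσr) (hg i) using 1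
  ring

lemma aeval_X_zero_mem_centerIdeal_prod_pow {ι : Type*} [Fintype ι] {r : ι → k}
    (hr : Pairwise fun i j ↦ IsUnit (r i - r j)) {n : ℕ} {Q g : MvPolynomial (Fin 2) k}
    {σ : ι → Polynomial k}
    (hσ : ∀ i, (Polynomial.X : Polynomial k) ^ n ∣ aeval ![Polynomial.X, σ i] Q)
    (hg : ∀ i, (X 0 : MvPolynomial (Fin 2) k) ^ n ∣
      aeval ![(X 0 : MvPolynomial (Fin 2) k), C (r i) + X 0 * X 1] g -
        Polynomial.aeval (X 0) (σ i)) :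
    aeval ![X 0, g] Q ∈ centerIdeal (∏ i, (Polynomial.X - Polynomial.C (r i))) ^ n := by
  refine mem_centerIdeal_prod_pow hr fun i ↦ ?_
  have hσX : (X 0 : MvPolynomial (Fin 2) k) ^ n ∣
      aeval ![X 0, Polynomial.aeval (X 0) (σ i)] Q := by
    have h := map_dvd (Polynomial.aeval (R := k) (X 0 : MvPolynomial (Fin 2) k)) (hσ i)
    rwa [map_aeval_pair, map_pow, Polynomial.aeval_X] at h
  rw [map_aeval_pair, aeval_X]
  exact (dvd_iff_dvd_of_dvd_sub (dvd_aeval_pair_sub_aeval_pair (by simp) (hg i) Q)).2 hσX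

end BlowUp

section Hensel

variable {k R : Type*} [CommRing k] [CommRing R] [Algebra k R]

lemma pow_dvd_sub_of_isCoprime_eval_derivative {f : Polynomial R} {n : ℕ} {x u v : R}
    (hv : IsCoprime x (f.derivative.eval v)) (huv : x ∣ u - v)
    (hfu : x ^ n ∣ f.eval u) (hfv : x ^ n ∣ f.eval v) : x ^ n ∣ u - v := by
  obtain ⟨a, ha⟩ := f.binomExpansion v (u - v)
  have hfactor : f.eval u - f.eval v = (f.derivative.eval v + a * (u - v)) * (u - v) := by
    rw [add_sub_cancel] at ha
    rw [ha]
    ring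
  have hcop : IsCoprime (x ^ n) (f.derivative.eval v + a * (u - v)) := by
    obtain ⟨b, hb⟩ := huv
    rw [hb, mul_left_comm]
    exact (hv.add_mul_left_right (a * b)).pow_left
  exact hcop.dvd_of_dvd_mul_left (hfactor ▸ dvd_sub hfu hfv)

lemma isCoprime_eval_derivative_of_C_dvd_sub_map {q : Polynomial k} (hq : q.Separable)
    {f : Polynomial R} {x v : R} (hf : Polynomial.C x ∣ f - q.map (algebraMap k R))
    (hv : x ∣ Polynomial.aeval v q) : IsCoprime x (f.derivative.eval v) := by
  have hsep : IsCoprime x (Polynomial.aeval v q.derivative) :=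
    IsCoprime.of_isCoprime_of_dvd_left (IsCoprime.map hq (Polynomial.aeval v).toRingHom) hv
  obtain ⟨F, hF⟩ := hf
  have heval : f.derivative.eval v =
      Polynomial.aeval v q.derivative + x * F.derivative.eval v := by
    rw [sub_eq_iff_eq_add'.1 hF]
    simp [Polynomial.eval_map_algebraMap]
  rw [heval]
  exact hsep.add_mul_left_right _

lemma C_dvd_aeval_C_X_sub_map (Q : MvPolynomial (Fin 2) k) (x : R) :
    Polynomial.C x ∣ aeval ![Polynomial.C x, Polynomial.X] Q -
      (aeval ![(0 : Polynomial k), Polynomial.X] Q).map (algebraMap k R) := by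
  have hmap : (aeval ![(0 : Polynomial k), Polynomial.X] Q).map (algebraMap k R) =
      aeval ![(0 : Polynomial R), Polynomial.X] Q := by
    simpa using map_aeval_pair (Polynomial.mapAlgHom (Algebra.ofId k R)) Q 0 Polynomial.X
  rw [hmap]
  exact dvd_aeval_pair_sub_aeval_pair (by simp) (by simp) Q

lemma pow_dvd_sub_of_pow_dvd_aeval_pair {Q : MvPolynomial (Fin 2) k}
    (hQ : (aeval ![(0 : Polynomial k), Polynomial.X] Q).Separable) {n : ℕ} {x u v : R}
    (huv : x ∣ u - v) (hu : x ^ n ∣ aeval ![x, u] Q) (hv : x ^ n ∣ aeval ![x, v] Q) :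
    x ^ n ∣ u - v := by
  rcases eq_or_ne n 0 with rfl | hn
  · simp
  have heval (t : R) :
      (aeval ![Polynomial.C x, Polynomial.X] Q : Polynomial R).eval t = aeval ![x, t] Q := by
    simpa using map_aeval_pair ((Polynomial.aeval t).restrictScalars k) Q (Polynomial.C x)
      (Polynomial.X : Polynomial R)
  have hv₀ : x ∣ Polynomial.aeval v (aeval ![(0 : Polynomial k), Polynomial.X] Q) :=
    (dvd_iff_dvd_of_dvd_sub (dvd_aeval_pair_sub_aeval_aeval Q x v)).1 ((dvd_pow_self x hn).trans hv)
  exact pow_dvd_sub_of_isCoprime_eval_derivative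
    (isCoprime_eval_derivative_of_C_dvd_sub_map hQ (C_dvd_aeval_C_X_sub_map Q x) hv₀) huv
    (by rwa [heval]) (by rwa [heval])

end Hensel

section Regularity

variable {k σ : Type*} [CommRing k]

lemma isLeftRegular_aeval_X_of_monic {P : Polynomial k} (hP : P.Monic) (i : σ) :
    IsLeftRegular (Polynomial.aeval (X i : MvPolynomial σ k) P) := by
  classical
  let e := (renameEquiv k (Equiv.optionSubtypeNe i).symm).trans (optionEquivLeft k {j // j ≠ i})
  have hi : e (X i) = Polynomial.X := by simp [e]
  have he : e (Polynomial.aeval (X i) P) = P.map C := by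
    rw [← Polynomial.aeval_algHom_apply, hi, Polynomial.aeval_X_left_eq_map, algebraMap_eq]
  have hreg : IsLeftRegular (e (Polynomial.aeval (X i) P)) := he ▸ (hP.map C).isRegular.left
  intro a b hab
  exact e.injective (hreg (by simpa only [← map_mul] using congrArg e hab))

lemma X_dvd_of_X_dvd_aeval_X_mul {P : Polynomial k} (hP : P.Monic) {i j : σ} (hij : j ≠ i)
    {a : MvPolynomial σ k} (h : X i ∣ Polynomial.aeval (X j) P * a) : X i ∣ a := by
  classical
  let ρ : MvPolynomial σ k →ₐ[k] MvPolynomial σ k := aeval (Function.update X i 0)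
  have hρj : ρ (X j) = X j := by simp [ρ, hij]
  have hρ : ρ (Polynomial.aeval (X j) P) * ρ a = 0 := by
    obtain ⟨b, hb⟩ := h
    rw [← map_mul, hb, map_mul]
    simp [ρ]
  rw [← Polynomial.aeval_algHom_apply, hρj] at hρ
  have ha : ρ a = 0 := isLeftRegular_aeval_X_of_monic hP j (by simpa using hρ)
  have hdvd : X i ∣ aeval X a - ρ a := dvd_aeval_sub_aeval (fun l ↦ by
    by_cases hl : l = i <;> simp [hl]) a
  rwa [ha, sub_zero, aeval_X_left_apply] at hdvd

lemma isLeftRegular_quotientMk_span_singleton {A : Type*} [CommRing A] {p F : A}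
    (hp : IsLeftRegular p) (h : ∀ a, p ∣ F * a → p ∣ a) :
    IsLeftRegular (Ideal.Quotient.mk (Ideal.span {F}) p) := by
  refine isLeftRegular_of_non_zero_divisor _ fun a ha ↦ ?_
  obtain ⟨a, rfl⟩ := Ideal.Quotient.mk_surjective a
  rw [← map_mul, Ideal.Quotient.eq_zero_iff_dvd] at ha
  obtain ⟨b, hb⟩ := ha
  obtain ⟨b, rfl⟩ := h b ⟨a, hb.symm⟩
  rw [Ideal.Quotient.eq_zero_iff_dvd]
  exact ⟨b, hp (by simpa only [mul_left_comm] using hb)⟩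

lemma isLeftRegular_quotientMk_X {P : Polynomial k} (hP : P.Monic) {c : k} (hc : IsUnit c)
    {i j : σ} (hij : j ≠ i) {F : MvPolynomial σ k}
    (hF : X i ∣ F + C c * Polynomial.aeval (X j) P) :
    IsLeftRegular (Ideal.Quotient.mk (Ideal.span {F}) (X i)) := by
  refine isLeftRegular_quotientMk_span_singleton isRegular_X.left fun a ha ↦ ?_
  refine X_dvd_of_X_dvd_aeval_X_mul hP hij ?_
  have hca : X i ∣ C c * (Polynomial.aeval (X j) P * a) := by
    have h := dvd_sub (hF.mul_right a) ha
    rwa [add_mul, add_sub_cancel_left, mul_assoc] at h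
  exact ((hc.map (C : k →+* MvPolynomial σ k)).dvd_mul_left).1 hca

end Regularity

section Divisibility

variable {k R : Type*} [CommRing k] [CommRing R] [Algebra k R] {n : ℕ} {x s z : R}
  {Q g : MvPolynomial (Fin 2) k} {P : Polynomial k}

lemma dvd_aeval_of_pow_dvd_aeval_pair (hn : n ≠ 0)
    (hQ : aeval ![(0 : Polynomial k), Polynomial.X] Q ∣ P) (h : x ^ n ∣ aeval ![x, z] Q) :
    x ∣ Polynomial.aeval z P :=
  ((dvd_iff_dvd_of_dvd_sub (dvd_aeval_pair_sub_aeval_aeval Q x z)).1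
    ((dvd_pow_self x hn).trans h)).trans (map_dvd (Polynomial.aeval z) hQ)

lemma dvd_sub_aeval_pair (hg : X 1 - g ∈ centerIdeal P) (hs : x ∣ Polynomial.aeval s P) :
    x ∣ s - aeval ![x, s] g := by
  rw [← pow_one (centerIdeal P)] at hg
  simpa using pow_dvd_aeval_pair_of_mem_centerIdeal_pow hg hs

lemma pow_dvd_aeval_pair_aeval_pair (hgQ : aeval ![X 0, g] Q ∈ centerIdeal P ^ n)
    (hs : x ∣ Polynomial.aeval s P) : x ^ n ∣ aeval ![x, aeval ![x, s] g] Q := by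
  have h := pow_dvd_aeval_pair_of_mem_centerIdeal_pow hgQ hs
  rwa [map_aeval_pair, aeval_X] at h

lemma pow_dvd_sub_aeval_pair (hQ : (aeval ![(0 : Polynomial k), Polynomial.X] Q).Separable)
    (hg : X 1 - g ∈ centerIdeal P) (hgQ : aeval ![X 0, g] Q ∈ centerIdeal P ^ n)
    (hs : x ∣ Polynomial.aeval s P) (hzs : x ∣ z - s) (hz : x ^ n ∣ aeval ![x, z] Q) :
    x ^ n ∣ z - aeval ![x, s] g := by
  have hzg : x ∣ z - aeval ![x, s] g :=
    sub_add_sub_cancel z s _ ▸ dvd_add hzs (dvd_sub_aeval_pair hg hs)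
  exact pow_dvd_sub_of_pow_dvd_aeval_pair hQ hzg hz (pow_dvd_aeval_pair_aeval_pair hgQ hs)

end Divisibility

section Hypersurface

variable {k σ : Type*} [CommRing k]

/-- The coordinate ring `k[σ]/(F)` of the hypersurface `F = 0`. -/
abbrev HypersurfaceRing (F : MvPolynomial σ k) : Type _ := MvPolynomial σ k ⧸ Ideal.span {F}

namespace HypersurfaceRing

/-- The residue class of the variable `X i`, as a coordinate function on `F = 0`. -/
noncomputable abbrev coord (F : MvPolynomial σ k) (i : σ) : HypersurfaceRing F :=
  Ideal.Quotient.mk _ (X i)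

variable {F : MvPolynomial σ k} {B : Type*} [CommRing B] [Algebra k B]

lemma aeval_coord (F p : MvPolynomial σ k) :
    aeval (coord F) p = Ideal.Quotient.mk (Ideal.span {F}) p :=
  (comp_aeval_apply X (Ideal.Quotient.mkₐ k (Ideal.span {F})) p).symm.trans
    (by rw [aeval_X_left_apply]; rfl)

/-- The point of the hypersurface `F = 0` with coordinates `b` in `B`, as a `k`-algebra map. -/
noncomputable def lift (b : σ → B) (hb : aeval b F = 0) : HypersurfaceRing F →ₐ[k] B :=
  Ideal.Quotient.liftₐ _ (aeval b) fun p hp ↦ by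
    obtain ⟨q, rfl⟩ := Ideal.mem_span_singleton.1 hp
    rw [map_mul, hb, zero_mul]

@[simp]
lemma lift_coord {b : σ → B} (hb : aeval b F = 0) (i : σ) : lift b hb (coord F i) = b i :=
  aeval_X b i

lemma algHom_ext {φ ψ : HypersurfaceRing F →ₐ[k] B} (h : ∀ i, φ (coord F i) = ψ (coord F i)) :
    φ = ψ :=
  Ideal.Quotient.algHom_ext _ (MvPolynomial.algHom_ext h)

end HypersurfaceRing

end Hypersurface

section Danielewski

open HypersurfaceRing

variable {k : Type*} [CommRing k] {n : ℕ} {Q g : MvPolynomial (Fin 2) k} {P : Polynomial k}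

/-- The equation `x^n y = Q(x, z)` of a Danielewski hypersurface, in the coordinates
`x, y, z, w = X 0, X 1, X 2, X 3` of its cylinder. -/
noncomputable abbrev danielewskiPoly (n : ℕ) (Q : MvPolynomial (Fin 2) k) :
    MvPolynomial (Fin 4) k :=
  X 0 ^ n * X 1 - aeval ![X 0, X 2] Q

/-- The equation `x y = P(z)` of a Danielewski surface, in the coordinates
`x, y, z, w = X 0, X 1, X 2, X 3` of its cylinder. -/
noncomputable abbrev surfacePoly (P : Polynomial k) : MvPolynomial (Fin 4) k :=
  X 0 * X 1 - Polynomial.aeval (X 2) P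

lemma aeval_danielewskiPoly {B : Type*} [CommRing B] [Algebra k B] (b : Fin 4 → B) :
    aeval b (danielewskiPoly n Q) = b 0 ^ n * b 1 - aeval ![b 0, b 2] Q := by
  simp only [map_sub, map_mul, map_pow, map_aeval_pair, aeval_X]

lemma aeval_surfacePoly {B : Type*} [CommRing B] [Algebra k B] (b : Fin 4 → B) :
    aeval b (surfacePoly P) = b 0 * b 1 - Polynomial.aeval (b 2) P := by
  simp only [map_sub, map_mul, ← Polynomial.aeval_algHom_apply, aeval_X]

lemma coord_danielewskiPoly (n : ℕ) (Q : MvPolynomial (Fin 2) k) :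
    coord (danielewskiPoly n Q) 0 ^ n * coord (danielewskiPoly n Q) 1 =
      aeval ![coord (danielewskiPoly n Q) 0, coord (danielewskiPoly n Q) 2] Q := by
  rw [← sub_eq_zero, ← aeval_danielewskiPoly, aeval_coord, Ideal.Quotient.mk_singleton_self]

lemma coord_surfacePoly (P : Polynomial k) :
    coord (surfacePoly P) 0 * coord (surfacePoly P) 1 =
      Polynomial.aeval (coord (surfacePoly P) 2) P := by
  rw [← sub_eq_zero, ← aeval_surfacePoly, aeval_coord, Ideal.Quotient.mk_singleton_self]

lemma isLeftRegular_coord_danielewskiPoly (hn : n ≠ 0) (hP : P.Monic) {c : k} (hc : IsUnit c)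
    (hQ : aeval ![(0 : Polynomial k), Polynomial.X] Q = Polynomial.C c * P) :
    IsLeftRegular (coord (danielewskiPoly n Q) 0) := by
  refine isLeftRegular_quotientMk_X hP hc (j := 2) (by decide) ?_
  rw [sub_add]
  refine dvd_sub ((dvd_pow_self _ hn).mul_right _) ?_
  simpa [hQ, algebraMap_eq] using
    dvd_aeval_pair_sub_aeval_aeval Q (X 0 : MvPolynomial (Fin 4) k) (X 2)

lemma isLeftRegular_coord_surfacePoly (hP : P.Monic) : IsLeftRegular (coord (surfacePoly P) 0) :=
  isLeftRegular_quotientMk_X hP isUnit_one (j := 2) (by decide) (by simp)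

/-- The algebra map `x ↦ x`, `z ↦ z + x w`, `y ↦ P(z + x w) / x`,
`w ↦ (z - g(x, z + x w)) / x ^ n` from the cylinder over the surface to the cylinder over the
hypersurface; the divisions are encoded as products. -/
structure IsShear (n : ℕ) (Q g : MvPolynomial (Fin 2) k) (P : Polynomial k)
    (φ : HypersurfaceRing (surfacePoly P) →ₐ[k] HypersurfaceRing (danielewskiPoly n Q)) :
    Prop where
  map_x : φ (coord _ 0) = coord _ 0
  map_z : φ (coord _ 2) = coord _ 2 + coord _ 0 * coord _ 3
  mul_map_y : coord _ 0 * φ (coord _ 1) =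
    Polynomial.aeval (coord (danielewskiPoly n Q) 2 + coord _ 0 * coord _ 3) P
  pow_mul_map_w : coord _ 0 ^ n * φ (coord _ 3) =
    coord _ 2 - aeval ![coord (danielewskiPoly n Q) 0, coord _ 2 + coord _ 0 * coord _ 3] g

/-- The algebra map `x ↦ x`, `z ↦ ζ`, `y ↦ Q(x, ζ) / x ^ n`, `w ↦ (z - ζ) / x`, where
`ζ = g(x, z) + x ^ n w`, from the cylinder over the hypersurface to the cylinder over the
surface; the divisions are encoded as products. It is the inverse of the map of `IsShear`. -/
structure IsUnshear (n : ℕ) (Q g : MvPolynomial (Fin 2) k) (P : Polynomial k)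
    (ψ : HypersurfaceRing (danielewskiPoly n Q) →ₐ[k] HypersurfaceRing (surfacePoly P)) :
    Prop where
  map_x : ψ (coord _ 0) = coord _ 0
  map_z : ψ (coord _ 2) =
    aeval ![coord (surfacePoly P) 0, coord _ 2] g + coord _ 0 ^ n * coord _ 3
  pow_mul_map_y : coord _ 0 ^ n * ψ (coord _ 1) = aeval ![coord _ 0, ψ (coord _ 2)] Q
  mul_map_w : coord _ 0 * ψ (coord _ 3) = coord _ 2 - ψ (coord _ 2)

variable {φ : HypersurfaceRing (surfacePoly P) →ₐ[k] HypersurfaceRing (danielewskiPoly n Q)}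
  {ψ : HypersurfaceRing (danielewskiPoly n Q) →ₐ[k] HypersurfaceRing (surfacePoly P)}

lemma IsShear.comp_eq_id (hφ : IsShear n Q g P φ) (hψ : IsUnshear n Q g P ψ)
    (hx : IsLeftRegular (coord (danielewskiPoly n Q) 0)) : φ.comp ψ = AlgHom.id k _ := by
  have hz : φ (ψ (coord _ 2)) = coord _ 2 := by
    rw [hψ.map_z, map_add, map_mul, map_pow, map_aeval_pair, hφ.map_x, hφ.map_z,
      hφ.pow_mul_map_w, add_sub_cancel]
  refine algHom_ext fun i ↦ ?_
  rw [AlgHom.comp_apply, AlgHom.id_apply]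
  fin_cases i
  · exact (congrArg φ hψ.map_x).trans hφ.map_x
  · refine hx.pow n ?_
    have h := congrArg φ hψ.pow_mul_map_y
    rw [map_mul, map_pow, map_aeval_pair, hφ.map_x, hz, ← coord_danielewskiPoly] at h
    exact h
  · exact hz
  · refine hx ?_
    have h := congrArg φ hψ.mul_map_w
    rw [map_mul, map_sub, hφ.map_x, hz, hφ.map_z, add_sub_cancel_left] at h
    exact h

lemma IsUnshear.comp_eq_id (hψ : IsUnshear n Q g P ψ) (hφ : IsShear n Q g P φ)
    (hx : IsLeftRegular (coord (surfacePoly P) 0)) : ψ.comp φ = AlgHom.id k _ := by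
  have hz : ψ (coord _ 2 + coord _ 0 * coord _ 3) = coord _ 2 := by
    rw [map_add, map_mul, hψ.map_x, hψ.mul_map_w, add_sub_cancel]
  refine algHom_ext fun i ↦ ?_
  rw [AlgHom.comp_apply, AlgHom.id_apply]
  fin_cases i
  · exact (congrArg ψ hφ.map_x).trans hψ.map_x
  · refine hx ?_
    have h := congrArg ψ hφ.mul_map_y
    rw [map_mul, ← Polynomial.aeval_algHom_apply, hψ.map_x, hz, ← coord_surfacePoly] at h
    exact h
  · exact (congrArg ψ hφ.map_z).trans hz
  · refine hx.pow n ?_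
    have h := congrArg ψ hφ.pow_mul_map_w
    rw [map_mul, map_sub, map_pow, map_aeval_pair, hψ.map_x, hz, hψ.map_z,
      add_sub_cancel_left] at h
    exact h

lemma exists_isShear (hn : n ≠ 0)
    (hQ : (aeval ![(0 : Polynomial k), Polynomial.X] Q).Separable)
    (hQP : aeval ![(0 : Polynomial k), Polynomial.X] Q ∣ P)
    (hg : X 1 - g ∈ centerIdeal P) (hgQ : aeval ![X 0, g] Q ∈ centerIdeal P ^ n) :
    ∃ φ, IsShear n Q g P φ := by
  let x := coord (danielewskiPoly n Q) 0
  let z := coord (danielewskiPoly n Q) 2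
  let s := z + x * coord _ 3
  have hQz : x ^ n ∣ aeval ![x, z] Q := ⟨_, (coord_danielewskiPoly n Q).symm⟩
  have hsz : x ∣ s - z := ⟨_, add_sub_cancel_left _ _⟩
  have hPs : x ∣ Polynomial.aeval s P :=
    (dvd_iff_dvd_of_dvd_sub (dvd_polynomial_aeval_sub_aeval hsz P)).2
      (dvd_aeval_of_pow_dvd_aeval_pair hn hQP hQz)
  obtain ⟨w', hw'⟩ := pow_dvd_sub_aeval_pair hQ hg hgQ hPs (dvd_sub_comm.1 hsz) hQz
  obtain ⟨y', hy'⟩ := hPs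
  have hb : aeval ![x, y', s, w'] (surfacePoly P) = 0 := by
    rw [aeval_surfacePoly]
    exact sub_eq_zero.2 hy'.symm
  exact ⟨lift _ hb, lift_coord hb 0, lift_coord hb 2,
    (congrArg (x * ·) (lift_coord hb 1)).trans hy'.symm,
    (congrArg (x ^ n * ·) (lift_coord hb 3)).trans hw'.symm⟩

lemma exists_isUnshear (hn : n ≠ 0) (hg : X 1 - g ∈ centerIdeal P)
    (hgQ : aeval ![X 0, g] Q ∈ centerIdeal P ^ n) : ∃ ψ, IsUnshear n Q g P ψ := by
  let x := coord (surfacePoly P) 0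
  let z := coord (surfacePoly P) 2
  let ζ := aeval ![x, z] g + x ^ n * coord _ 3
  have hPz : x ∣ Polynomial.aeval z P := ⟨_, (coord_surfacePoly P).symm⟩
  have hζ : x ^ n ∣ ζ - aeval ![x, z] g := ⟨_, add_sub_cancel_left _ _⟩
  have hzζ : x ∣ z - ζ := by
    rw [← sub_sub]
    exact dvd_sub (dvd_sub_aeval_pair hg hPz) ((dvd_pow_self x hn).mul_right _)
  have hQζ : x ^ n ∣ aeval ![x, ζ] Q :=
    (dvd_iff_dvd_of_dvd_sub (dvd_aeval_pair_sub_aeval_pair (by simp) hζ Q)).2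
      (pow_dvd_aeval_pair_aeval_pair hgQ hPz)
  obtain ⟨y', hy'⟩ := hQζ
  obtain ⟨w', hw'⟩ := hzζ
  have hb : aeval ![x, y', ζ, w'] (danielewskiPoly n Q) = 0 := by
    rw [aeval_danielewskiPoly]
    exact sub_eq_zero.2 hy'.symm
  have hz : lift _ hb (coord _ 2) = ζ := lift_coord hb 2
  refine ⟨lift _ hb, lift_coord hb 0, hz, ?_, ?_⟩
  · rw [hz]
    exact (congrArg (x ^ n * ·) (lift_coord hb 1)).trans hy'.symm
  · rw [hz]
    exact (congrArg (x * ·) (lift_coord hb 3)).trans hw'.symm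

theorem cylinder_over_Danielewski_hypersurface_explicit_iso_general {ι : Type*} [Fintype ι]
    (hn : n ≠ 0) {r : ι → k} (hr : Pairwise fun i j ↦ IsUnit (r i - r j)) {c : k} (hc : IsUnit c)
    (hQ : aeval ![(0 : Polynomial k), Polynomial.X] Q =
      Polynomial.C c * ∏ i, (Polynomial.X - Polynomial.C (r i)))
    {σ : ι → Polynomial k} (hσ0 : ∀ i, (σ i).eval 0 = r i)
    (hσ : ∀ i, (Polynomial.X : Polynomial k) ^ n ∣ aeval ![Polynomial.X, σ i] Q)
    (hg : ∀ i, (X 0 : MvPolynomial (Fin 2) k) ^ n ∣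
      aeval ![(X 0 : MvPolynomial (Fin 2) k), C (r i) + X 0 * X 1] g -
        Polynomial.aeval (X 0) (σ i))
    (hP : P = ∏ i, (Polynomial.X - Polynomial.C (r i))) :
    ∃ Φ : HypersurfaceRing (surfacePoly P) ≃ₐ[k] HypersurfaceRing (danielewskiPoly n Q),
      IsShear n Q g P Φ := by
  have hmonic : P.Monic := hP ▸ Polynomial.monic_prod_X_sub_C r Finset.univ
  have hsep : P.Separable := hP ▸ Polynomial.separable_prod'
    (fun i _ j _ hij ↦ Polynomial.isCoprime_X_sub_C_of_isUnit_sub (hr hij))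
    fun i _ ↦ Polynomial.separable_X_sub_C
  have hgP : X 1 - g ∈ centerIdeal P := hP ▸
    X_one_sub_mem_centerIdeal_prod hr hσ0 fun i ↦ (dvd_pow_self _ hn).trans (hg i)
  have hgQ : aeval ![X 0, g] Q ∈ centerIdeal P ^ n := hP ▸
    aeval_X_zero_mem_centerIdeal_prod_pow hr hσ hg
  rw [← hP] at hQ
  have hcX : IsUnit (Polynomial.C c) := hc.map Polynomial.C
  obtain ⟨φ, hφ⟩ := exists_isShear hn (hQ ▸ hsep.unit_mul hcX) (hQ ▸ hcX.mul_left_dvd.2 dvd_rfl)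
    hgP hgQ
  obtain ⟨ψ, hψ⟩ := exists_isUnshear hn hgP hgQ
  exact ⟨AlgEquiv.ofAlgHom φ ψ
    (hφ.comp_eq_id hψ (isLeftRegular_coord_danielewskiPoly hn hmonic hc hQ))
    (hψ.comp_eq_id hφ (isLeftRegular_coord_surfacePoly hmonic)), hφ⟩

end Danielewski

theorem cylinder_over_Danielewski_hypersurface_explicit_iso
    (n : ℕ) (hn : 1 ≤ n) (d : ℕ) (hd : 2 ≤ d)
    (Q : MvPolynomial (Fin 2) ℂ)
    (r : Fin d → ℂ) (hr : Function.Injective r) (c : ℂ) (hc : c ≠ 0)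
    -- Q(0,z) has degree d and exactly the d pairwise distinct simple roots r₁,…,r_d
    (hQ0 : MvPolynomial.aeval ![(0 : Polynomial ℂ), Polynomial.X] Q =
      Polynomial.C c * ∏ i, (Polynomial.X - Polynomial.C (r i)))
    (σ : Fin d → Polynomial ℂ)
    (hσdeg : ∀ i, (σ i).degree < n)
    (hσ0 : ∀ i, (σ i).eval 0 = r i)
    (hσdvd : ∀ i, (Polynomial.X : Polynomial ℂ) ^ n ∣
      MvPolynomial.aeval ![Polynomial.X, σ i] Q)
    (g : MvPolynomial (Fin 2) ℂ)
    -- g(x, rᵢ + x·t) ≡ σᵢ(x) mod (xⁿ) in ℂ[x,t]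
    (hg : ∀ i, MvPolynomial.aeval ![(X 0 : MvPolynomial (Fin 2) ℂ), C (r i) + X 0 * X 1] g -
            Polynomial.aeval (X 0 : MvPolynomial (Fin 2) ℂ) (σ i) ∈
          Ideal.span {(X 0 : MvPolynomial (Fin 2) ℂ) ^ n})
    (P : Polynomial ℂ) (hP : P = ∏ i, (Polynomial.X - Polynomial.C (r i))) :
    ∃ Φ : WCylRing P ≃ₐ[ℂ] DHCylRing n Q,
      Φ (wMk P (X 0)) = dhMk n Q (X 0) ∧
      Φ (wMk P (X 2)) = dhMk n Q (X 2) + dhMk n Q (X 0) * dhMk n Q (X 3) ∧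
      dhMk n Q (X 0) * Φ (wMk P (X 1)) =
        Polynomial.aeval (dhMk n Q (X 2) + dhMk n Q (X 0) * dhMk n Q (X 3)) P ∧
      (dhMk n Q (X 0)) ^ n * Φ (wMk P (X 3)) =
        dhMk n Q (X 2) -
          MvPolynomial.aeval
            ![dhMk n Q (X 0), dhMk n Q (X 2) + dhMk n Q (X 0) * dhMk n Q (X 3)] g := by
  obtain ⟨Φ, hΦ⟩ := cylinder_over_Danielewski_hypersurface_explicit_iso_general
    (Nat.one_le_iff_ne_zero.1 hn) (fun i j hij ↦ (sub_ne_zero.2 (hr.ne hij)).isUnit) hc.isUnit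
    hQ0 hσ0 hσdvd (fun i ↦ Ideal.mem_span_singleton.1 (hg i)) hP
  exact ⟨Φ, hΦ.map_x, hΦ.map_z, hΦ.mul_map_y, hΦ.pow_mul_map_w⟩
end
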